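/- arXiv:2401.11912 — 3 statements merged into one kernel-verified Lean document; each statement's English description precedes it below -/
import Mathlib

section
/- For every integer k ≥ 3 there exists an integer N = R_u(k) such that for every n ≥ N and every Condorcet domain D on {1,…,n}, there exist a k-element subset A ⊆ {1,…,n} and a pair (i,j) ∈ {1,2,3} × {1,2,3} such that every triple a < b < c of elements of A satisfies the never condition iNj in D: no order of D, restricted to {a,b,c}, places the i-th smallest element of the triple in the j-th position from the top. -/
/-- `r` is a strict total order on `X`, supported on `X` (i.e. `r` never relates
elements outside `X`). -/
def IsLinearOrderOn {α : Type*} (X : Set α) (r : α → α → Prop) : Prop :=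
  (∀ a b, r a b → a ∈ X ∧ b ∈ X) ∧
  (∀ a ∈ X, ¬ r a a) ∧
  (∀ a ∈ X, ∀ b ∈ X, ∀ c ∈ X, r a b → r b c → r a c) ∧
  (∀ a ∈ X, ∀ b ∈ X, a ≠ b → r a b ∨ r b a)

/-- A domain on `X` is a set of linear orders on `X`. -/
def IsDomainOn {α : Type*} (X : Set α) (D : Set (α → α → Prop)) : Prop :=
  ∀ r ∈ D, IsLinearOrderOn X r

/-- The restriction of the order `r` to the subset `A`. -/
def restrictRel {α : Type*} (A : Set α) (r : α → α → Prop) : α → α → Prop :=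
  fun a b => a ∈ A ∧ b ∈ A ∧ r a b

/-- The restriction of the domain `D` to the subset `A`: the set of linear orders
on `A` induced by the orders in `D`. -/
def restrictDom {α : Type*} (A : Set α) (D : Set (α → α → Prop)) :
    Set (α → α → Prop) :=
  restrictRel A '' D

/-- `D` is `(k,s)`-abundant on `X`: its restriction to every `k`-element subset of `X`
contains at least `s` distinct linear orders. -/
def IsAbundant {α : Type*} (X : Set α) (D : Set (α → α → Prop)) (k s : ℕ) : Prop :=
  ∀ A : Set α, A ⊆ X → A.ncard = k → s ≤ (restrictDom A D).ncard

/-- `D` is exactly `(k,s)`-abundant: `(k,s)`-abundant but not `(k,s+1)`-abundant. -/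
def IsExactlyAbundant {α : Type*} (X : Set α) (D : Set (α → α → Prop)) (k s : ℕ) : Prop :=
  IsAbundant X D k s ∧ ¬ IsAbundant X D k (s + 1)

/-- The number of orders in the profile `R` that rank `a` above `b`. -/
noncomputable def majCount {α : Type*} (R : List (α → α → Prop)) (a b : α) : ℕ :=
  Nat.card {i : Fin R.length // (R.get i) a b}

/-- More than half of the orders in the profile `R` rank `a` above `b`. -/
def MajPrefers {α : Type*} (R : List (α → α → Prop)) (a b : α) : Prop :=
  R.length < 2 * majCount R a b

/-- `D` is a Condorcet domain on `X`: it is a domain on `X` and for every profile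
(list of orders from `D`) of odd length, the majority relation is transitive on `X`. -/
def IsCondorcetDomain {α : Type*} (X : Set α) (D : Set (α → α → Prop)) : Prop :=
  IsDomainOn X D ∧
  ∀ R : List (α → α → Prop), (∀ r ∈ R, r ∈ D) → Odd R.length →
    ∀ a ∈ X, ∀ b ∈ X, ∀ c ∈ X,
      MajPrefers R a b → MajPrefers R b c → MajPrefers R a c

/-- A maximal Condorcet domain on `X`. -/
def IsMaximalCondorcetDomain {α : Type*} (X : Set α) (D : Set (α → α → Prop)) : Prop :=
  IsCondorcetDomain X D ∧
  ∀ D' : Set (α → α → Prop), D ⊆ D' → IsCondorcetDomain X D' → D' = D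

/-- The position (from the top, 1-based) of `x` within the triple `{a,b,c}` under the
order `r`: one plus the number of elements of the triple ranked above `x`. -/
noncomputable def posInTriple (r : ℕ → ℕ → Prop) (a b c x : ℕ) : ℕ :=
  1 + Set.ncard {y : ℕ | (y = a ∨ y = b ∨ y = c) ∧ r y x}

/-- The `i`-th smallest element of the triple `a < b < c`. -/
def tripleNth (a b c i : ℕ) : ℕ := if i = 1 then a else if i = 2 then b else c

/-- The never condition `iNj` holds for the triple `a < b < c` in the domain `D`:
no order of `D`, restricted to `{a,b,c}`, places the `i`-th smallest element of the
triple in the `j`-th position from the top. -/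
def NeverCondition (D : Set (ℕ → ℕ → Prop)) (a b c i j : ℕ) : Prop :=
  ∀ r ∈ D, posInTriple r a b c (tripleNth a b c i) ≠ j

open Filter in
theorem uf_exists {F : Type} [Finite F] (U : Ultrafilter ℕ) (P : ℕ → F → Prop)
    (h : ∀ᶠ x in (U : Filter ℕ), ∃ p, P x p) : ∃ p, ∀ᶠ x in (U : Filter ℕ), P x p := by
  by_contra hc
  push Not at hc
  have h2 : ∀ᶠ x in (U : Filter ℕ), ∀ p, ¬ P x p := by
    rw [Filter.eventually_all]
    intro p
    simpa using hc p
  obtain ⟨x, ⟨p, hp⟩, hx⟩ := (h.and h2).exists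
  exact hx p hp

open Filter in
theorem ramsey_aux {F : Type} [Finite F] (P : ℕ → ℕ → ℕ → ℕ → F → Prop)
    (hP : ∀ a b c, 1 ≤ a → a < b → b < c →
      ∀ᶠ N in (hyperfilter ℕ : Filter ℕ), ∃ p, P N a b c p) (k : ℕ) :
    ∃ A : Finset ℕ, A.card = k ∧ (∀ a ∈ A, 1 ≤ a) ∧ ∃ p, ∀ᶠ N in (hyperfilter ℕ : Filter ℕ),
      ∀ a ∈ A, ∀ b ∈ A, ∀ c ∈ A, a < b → b < c → P N a b c p := by
  set U : Filter ℕ := (hyperfilter ℕ : Filter ℕ) with hU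
  have hgt : ∀ a : ℕ, ∀ᶠ x in U, a < x := fun a =>
    (Nat.hyperfilter_le_atTop) (eventually_gt_atTop a)
  have h3 : ∀ a b c, 1 ≤ a → a < b → b < c → ∃ p, ∀ᶠ N in U, P N a b c p :=
    fun a b c h1 h2 h3 => uf_exists _ _ (hP a b c h1 h2 h3)
  have h2 : ∀ a b, 1 ≤ a → a < b → ∃ p, ∀ᶠ c in U, ∀ᶠ N in U, P N a b c p :=
    fun a b h1 h2 => uf_exists _ (fun c p => ∀ᶠ N in U, P N a b c p)
      ((hgt b).mono fun c hc => h3 a b c h1 h2 hc)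
  have h1 : ∀ a, 1 ≤ a → ∃ p, ∀ᶠ b in U, ∀ᶠ c in U, ∀ᶠ N in U, P N a b c p :=
    fun a h1 => uf_exists _ (fun b p => ∀ᶠ c in U, ∀ᶠ N in U, P N a b c p)
      ((hgt a).mono fun c hc => h2 a c h1 hc)
  obtain ⟨p, h0⟩ : ∃ p, ∀ᶠ a in U, ∀ᶠ b in U, ∀ᶠ c in U, ∀ᶠ N in U, P N a b c p :=
    uf_exists _ (fun a p => ∀ᶠ b in U, ∀ᶠ c in U, ∀ᶠ N in U, P N a b c p)
      ((hgt 0).mono fun c hc => h1 c hc)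
  have key : ∃ A : Finset ℕ, A.card = k ∧ (∀ a ∈ A, 1 ≤ a) ∧
      (∀ a ∈ A, ∀ᶠ b in U, ∀ᶠ c in U, ∀ᶠ N in U, P N a b c p) ∧
      (∀ a ∈ A, ∀ b ∈ A, a < b → ∀ᶠ c in U, ∀ᶠ N in U, P N a b c p) ∧
      (∀ a ∈ A, ∀ b ∈ A, ∀ c ∈ A, a < b → b < c → ∀ᶠ N in U, P N a b c p) := by
    induction k with
    | zero => exact ⟨∅, by simp⟩
    | succ k ih =>
      obtain ⟨A, hA, e0, e1, e2, e3⟩ := ih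
      have f1 : ∀ᶠ x in U, ∀ a ∈ A, a < x := (eventually_all_finset A).2 fun a _ => hgt a
      have f2 : ∀ᶠ x in U, ∀ a ∈ A, ∀ᶠ c in U, ∀ᶠ N in U, P N a x c p :=
        (eventually_all_finset A).2 fun a ha => e1 a ha
      have f3 : ∀ᶠ x in U, ∀ a ∈ A, ∀ b ∈ A, a < b → ∀ᶠ N in U, P N a b x p :=
        (eventually_all_finset A).2 fun a ha => (eventually_all_finset A).2 fun b hb => by
          by_cases hab : a < b
          · exact (e2 a ha b hb hab).mono fun x hx _ => hx
          · exact Eventually.of_forall fun x hx => absurd hx hab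
      obtain ⟨x, hx0, hx1, hx2, hx3, hx4⟩ := ((hgt 0).and (h0.and (f1.and (f2.and f3)))).exists
      have hxA : x ∉ A := fun h => lt_irrefl _ (hx2 x h)
      refine ⟨insert x A, by rw [Finset.card_insert_of_notMem hxA, hA], ?_, ?_, ?_, ?_⟩
      · intro a ha
        rcases Finset.mem_insert.1 ha with h_a | ha
        · exact h_a ▸ hx0
        · exact e0 a ha
      · intro a ha
        rcases Finset.mem_insert.1 ha with h_a | ha
        · exact h_a ▸ hx1
        · exact e1 a ha
      · intro a ha b hb hab
        rcases Finset.mem_insert.1 hb with h_b | hb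
        · rcases Finset.mem_insert.1 ha with h_a | ha
          · omega
          · exact h_b ▸ hx3 a ha
        · rcases Finset.mem_insert.1 ha with h_a | ha
          · have := hx2 b hb
            omega
          · exact e2 a ha b hb hab
      · intro a ha b hb c hc hab hbc
        rcases Finset.mem_insert.1 hc with h_c | hc
        · rcases Finset.mem_insert.1 hb with h_b | hb
          · omega
          · rcases Finset.mem_insert.1 ha with h_a | ha
            · have := hx2 b hb
              omega
            · exact h_c ▸ hx4 a ha b hb hab
        · have := hx2 c hc
          rcases Finset.mem_insert.1 hb with h_b | hb
          · omega
          · rcases Finset.mem_insert.1 ha with h_a | ha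
            · omega
            · exact e3 a ha b hb c hc hab hbc
  obtain ⟨A, hA, e0, -, -, e3⟩ := key
  refine ⟨A, hA, e0, p, ?_⟩
  refine (eventually_all_finset A).2 fun a ha => (eventually_all_finset A).2 fun b hb =>
    (eventually_all_finset A).2 fun c hc => ?_
  by_cases h : a < b ∧ b < c
  · exact (e3 a ha b hb c hc h.1 h.2).mono fun x hx _ _ => hx
  · exact Eventually.of_forall fun x h1 h2 => absurd ⟨h1, h2⟩ h

open Classical in
theorem majCount_three {α : Type*} (r s t : α → α → Prop) (x y : α) :
    majCount [r, s, t] x y =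
      (if r x y then 1 else 0) + (if s x y then 1 else 0) + (if t x y then 1 else 0) := by
  have : majCount [r, s, t] x y
      = Fintype.card {i : Fin 3 // ([r, s, t].get i) x y} := by
    unfold majCount
    exact Nat.card_eq_fintype_card
  rw [this, Fintype.card_subtype, Finset.card_filter, Fin.sum_univ_three]
  rfl

theorem no_cycle {X : Set ℕ} {D : Set (ℕ → ℕ → Prop)} (hD : IsCondorcetDomain X D)
    {a b c : ℕ} (ha : a ∈ X) (hb : b ∈ X) (hc : c ∈ X) {r s t : ℕ → ℕ → Prop}
    (hr : r ∈ D) (hs : s ∈ D) (ht : t ∈ D)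
    (r1 : r a b) (r2 : r b c) (s1 : s b c) (s2 : s c a) (t1 : t c a) (t2 : t a b) : False := by
  obtain ⟨hdom, hmaj⟩ := hD
  have asym : ∀ q ∈ D, ∀ x ∈ X, ∀ y ∈ X, q x y → ¬ q y x := fun q hq x hx y hy h1 h2 =>
    (hdom q hq).2.1 x hx ((hdom q hq).2.2.1 x hx y hy x hx h1 h2)
  have := hmaj [r, s, t] (by simp [hr, hs, ht]) (by simp; decide) a ha b hb c hc
    (by unfold MajPrefers; rw [majCount_three, if_pos r1, if_pos t2]; simp; omega)
    (by unfold MajPrefers; rw [majCount_three, if_pos r2, if_pos s1]; simp; omega)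
  unfold MajPrefers at this
  rw [majCount_three, if_neg (asym s hs c hc a ha s2), if_neg (asym t ht c hc a ha t1)] at this
  split_ifs at this <;> simp at this

open Classical in
theorem pos_eq (r : ℕ → ℕ → Prop) (a b c x y z : ℕ) (hyz : y ≠ z) (hx : ¬ r x x)
    (h : ∀ w, (w = a ∨ w = b ∨ w = c) ↔ (w = x ∨ w = y ∨ w = z)) :
    posInTriple r a b c x = 1 + ((if r y x then 1 else 0) + (if r z x then 1 else 0)) := by
  unfold posInTriple
  have : {w : ℕ | (w = a ∨ w = b ∨ w = c) ∧ r w x}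
      = ↑(({y, z} : Finset ℕ).filter (fun w => r w x)) := by
    ext w
    simp only [h, Set.mem_ofPred_eq, Finset.coe_filter, Finset.mem_insert, Finset.mem_singleton]
    constructor
    · rintro ⟨rfl | h | h, h2⟩
      · exact absurd h2 hx
      · exact ⟨Or.inl h, h2⟩
      · exact ⟨Or.inr h, h2⟩
    · rintro ⟨h1, h2⟩
      exact ⟨Or.inr h1, h2⟩
  rw [this, Set.ncard_coe_finset, Finset.card_filter, Finset.sum_pair hyz]

theorem triple_never {X : Set ℕ} {D : Set (ℕ → ℕ → Prop)} (hD : IsCondorcetDomain X D)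
    {a b c : ℕ} (ha : a ∈ X) (hb : b ∈ X) (hc : c ∈ X) (hab : a < b) (hbc : b < c) :
    ∃ p : Fin 3 × Fin 3, NeverCondition D a b c (p.1 + 1) (p.2 + 1) := by
  have hdom := hD.1
  have E : ∀ x ∈ X, ∀ y ∈ X, ∀ z ∈ X, ¬ ((∃ r ∈ D, r x y ∧ r y z) ∧ (∃ r ∈ D, r y z ∧ r z x) ∧
      (∃ r ∈ D, r z x ∧ r x y)) := by
    rintro x hx y hy z hz ⟨⟨r, hr, r1, r2⟩, ⟨s, hs, s1, s2⟩, ⟨t, ht, t1, t2⟩⟩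
    exact no_cycle hD hx hy hz hr hs ht r1 r2 s1 s2 t1 t2
  have tot : ∀ r ∈ D, ∀ x ∈ X, ∀ y ∈ X, x ≠ y → (r y x ↔ ¬ r x y) := by
    intro r hr x hx y hy hxy
    constructor
    · intro h1 h2
      exact (hdom r hr).2.1 x hx ((hdom r hr).2.2.1 x hx y hy x hx h2 h1)
    · intro h
      exact ((hdom r hr).2.2.2 x hx y hy hxy).resolve_left h
  have pa : ∀ r ∈ D, _ := fun r hr => pos_eq r a b c a b c hbc.ne ((hdom r hr).2.1 a ha)
    (by intro w; tauto)
  have pb : ∀ r ∈ D, _ := fun r hr => pos_eq r a b c b a c (hab.trans hbc).ne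
    ((hdom r hr).2.1 b hb) (by intro w; tauto)
  have pc : ∀ r ∈ D, _ := fun r hr => pos_eq r a b c c a b hab.ne ((hdom r hr).2.1 c hc)
    (by intro w; tauto)
  have E1 := E a ha b hb c hc
  have E2 := E a ha c hc b hb
  have tab : ∀ r ∈ D, _ := fun r hr => tot r hr a ha b hb hab.ne
  have tac : ∀ r ∈ D, _ := fun r hr => tot r hr a ha c hc (hab.trans hbc).ne
  have tbc : ∀ r ∈ D, _ := fun r hr => tot r hr b hb c hc hbc.ne
  rw [not_and_or, not_and_or] at E1 E2
  push Not at E1 E2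
  by_contra hcon
  have F : ∀ i j : Fin 3, ∃ r ∈ D, posInTriple r a b c (tripleNth a b c (i + 1)) = j + 1 := by
    intro i j
    by_contra h
    push Not at h
    exact hcon ⟨(i, j), h⟩
  rcases E1 with h1 | h1 | h1 <;> rcases E2 with h2 | h2 | h2
  on_goal 1 => obtain ⟨r, hr, h⟩ := F 0 0
  on_goal 2 => obtain ⟨r, hr, h⟩ := F 1 1
  on_goal 3 => obtain ⟨r, hr, h⟩ := F 2 2
  on_goal 4 => obtain ⟨r, hr, h⟩ := F 2 1
  on_goal 5 => obtain ⟨r, hr, h⟩ := F 0 2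
  on_goal 6 => obtain ⟨r, hr, h⟩ := F 1 0
  on_goal 7 => obtain ⟨r, hr, h⟩ := F 1 2
  on_goal 8 => obtain ⟨r, hr, h⟩ := F 2 0
  on_goal 9 => obtain ⟨r, hr, h⟩ := F 0 1
  all_goals
    have h1 := h1 r hr
    have h2 := h2 r hr
    simp only [tripleNth, Fin.isValue, Fin.val_zero, Fin.val_one, Fin.val_two] at h
    norm_num at h
    simp only [pa r hr, pb r hr, pc r hr] at h
    have t1 := tab r hr
    have t2 := tac r hr
    have t3 := tbc r hr
    by_cases q1 : r a b <;> by_cases q2 : r a c <;> by_cases q3 : r b c <;>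
      simp only [q1, q2, q3, not_true_eq_false, not_false_eq_true, iff_true, iff_false]
        at t1 t2 t3 <;>
      simp [q1, q2, q3, t1, t2, t3] at h h1 h2

/-- Ramsey property: for every `k ≥ 3` there is an `N` such that for all `n ≥ N`,
every Condorcet domain on `{1,…,n}` has a `k`-element subset `A` and a never condition
`iNj` satisfied by every triple `a < b < c` of elements of `A`. -/
theorem condorcet_ramsey_never_condition (k : ℕ) (hk : 3 ≤ k) :
    ∃ N : ℕ, ∀ n : ℕ, N ≤ n → ∀ D : Set (ℕ → ℕ → Prop),
      IsCondorcetDomain (Set.Icc 1 n) D →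
      ∃ A : Set ℕ, A ⊆ Set.Icc 1 n ∧ A.ncard = k ∧
        ∃ i ∈ ({1, 2, 3} : Set ℕ), ∃ j ∈ ({1, 2, 3} : Set ℕ),
          ∀ a ∈ A, ∀ b ∈ A, ∀ c ∈ A, a < b → b < c → NeverCondition D a b c i j := by
  by_contra hcon
  push Not at hcon
  choose n hn D hD hbad using hcon
  obtain ⟨A, hA, hA1, p, hp⟩ := ramsey_aux
    (fun N a b c (p : Fin 3 × Fin 3) => NeverCondition (D N) a b c (p.1 + 1) (p.2 + 1))
    (by
      intro a b c h1 hab hbc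
      refine ((Filter.eventually_ge_atTop c).filter_mono Nat.hyperfilter_le_atTop).mono fun N hN => ?_
      have := hn N
      exact triple_never (hD N) ⟨by omega, by omega⟩ ⟨by omega, by omega⟩
        ⟨by omega, by omega⟩ hab hbc) k
  obtain ⟨N, hN, hN2⟩ := (hp.and (Nat.hyperfilter_le_atTop
    (Filter.eventually_ge_atTop (A.sup id)))).exists
  have h3 : ∀ i : Fin 3, (i : ℕ) + 1 ∈ ({1, 2, 3} : Set ℕ) := by
    intro i
    fin_cases i <;> simp
  obtain ⟨a, ha, b, hb, c, hc, hab, hbc, hh⟩ := hbad N (A : Set ℕ)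
    (fun a ha => ⟨hA1 a ha, (Finset.le_sup (f := id) ha).trans (hN2.trans (hn N))⟩)
    (by rw [Set.ncard_coe_finset, hA]) _ (h3 p.1) _ (h3 p.2)
  exact hh (hN a ha b hb c hc hab hbc)
end

section
/- Let m ≥ 1 and let (i,j) ∈ {1,2,3} × {1,2,3}. If D is a domain on {1,…,m} such that every triple a < b < c of elements of {1,…,m} satisfies the same never condition iNj (no order of D, restricted to {a,b,c}, places the i-th smallest element of the triple in the j-th position from the top), then |D| ≤ 2^{m-1}. -/
def AgreeOff (S : Finset ℕ) (x : ℕ) (r r' : ℕ → ℕ → Prop) : Prop :=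
  ∀ a ∈ S, ∀ b ∈ S, a ≠ x → b ≠ x → (r a b ↔ r' a b)

def AllTriples (C : (ℕ → ℕ → Prop) → ℕ → ℕ → ℕ → Prop) (S : Finset ℕ) (r : ℕ → ℕ → Prop) : Prop :=
  ∀ a ∈ S, ∀ b ∈ S, ∀ c ∈ S, a < b → b < c → C r a b c

def Good (C : (ℕ → ℕ → Prop) → ℕ → ℕ → ℕ → Prop) (S : Finset ℕ) (r : ℕ → ℕ → Prop) : Prop :=
  IsLinearOrderOn (S : Set ℕ) r ∧ AllTriples C S r

def StepFor (C : (ℕ → ℕ → Prop) → ℕ → ℕ → ℕ → Prop) (S : Finset ℕ)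
    (p : (ℕ → ℕ → Prop) → Prop) (x : ℕ) : Prop :=
  ∀ r r', Good C S r → Good C S r' → p r → p r' → AgreeOff S x r r' →
    ∀ y ∈ S, y ≠ x → r y x → r' y x

lemma eq_of_step {C S p x} (hx : x ∈ S) (hs : StepFor C S p x) {r r' : ℕ → ℕ → Prop}
    (h : Good C S r) (h' : Good C S r') (hp : p r) (hp' : p r') (ha : AgreeOff S x r r') :
    r = r' := by
  have ha' : AgreeOff S x r' r := fun a h1 b h2 h3 h4 => (ha a h1 b h2 h3 h4).symm
  have k1 := hs r r' h h' hp hp' ha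
  have k2 := hs r' r h' h hp' hp ha'
  obtain ⟨⟨s1, i1, t1, c1⟩, -⟩ := h
  obtain ⟨⟨s2, i2, t2, c2⟩, -⟩ := h'
  simp only [Finset.mem_coe] at *
  unfold AgreeOff at ha
  funext a b
  apply propext
  by_cases hS : a ∈ S ∧ b ∈ S
  · obtain ⟨hA, hB⟩ := hS
    by_cases hax : a = x
    · by_cases hbx : b = x
      · subst hax; subst hbx
        exact ⟨fun h => absurd h (i1 _ hA), fun h => absurd h (i2 _ hA)⟩
      · subst hax
        have q1 := k1 b hB hbx
        have q2 := k2 b hB hbx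
        have e1 := c1 a hA b hB (Ne.symm hbx)
        have e2 := c2 a hA b hB (Ne.symm hbx)
        have f1 := t1 a hA b hB a hA
        have f2 := t2 a hA b hB a hA
        have g1 := i1 a hA
        have g2 := i2 a hA
        tauto
    · by_cases hbx : b = x
      · subst hbx
        exact ⟨k1 a hA hax, k2 a hA hax⟩
      · exact ha a hA b hB hax hbx
  · exact ⟨fun h => absurd (s1 _ _ h) hS, fun h => absurd (s2 _ _ h) hS⟩

lemma main_bound (C : (ℕ → ℕ → Prop) → ℕ → ℕ → ℕ → Prop)
    (hC : ∀ (A : Set ℕ) r a b c, a ∈ A → b ∈ A → c ∈ A → C r a b c → C (restrictRel A r) a b c)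
    (step : ∀ S : Finset ℕ, S.Nonempty → ∃ x ∈ S, ∃ y ∈ S, ∃ p,
      StepFor C S p x ∧ StepFor C S (fun r => ¬ p r) y) (n : ℕ) :
    ∀ S : Finset ℕ, S.card = n + 1 → ∀ D : Set (ℕ → ℕ → Prop), (∀ r ∈ D, Good C S r) →
      D.ncard ≤ 2 ^ n := by
  induction n with
  | zero =>
    intro S hS D hD
    obtain ⟨x, rfl⟩ := Finset.card_eq_one.mp hS
    have : D.Subsingleton := by
      intro r hr r' hr'
      have key : ∀ s ∈ D, ∀ a b, ¬ s a b := by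
        intro s hs a b hab
        obtain ⟨⟨s1, i1, -, -⟩, -⟩ := hD s hs
        have := s1 a b hab
        simp at this
        obtain ⟨rfl, rfl⟩ := this
        exact i1 _ (by simp) hab
      funext a b
      exact propext ⟨fun h => absurd h (key r hr a b), fun h => absurd h (key r' hr' a b)⟩
    have hf := this.finite
    simpa using (Set.ncard_le_one hf).mpr (fun a ha b hb => this ha hb)
  | succ n ih =>
    intro S hS D hD
    obtain ⟨x, hx, y, hy, p, h1, h2⟩ := step S (Finset.card_pos.mp (by omega))
    have piece : ∀ z ∈ S, ∀ q : (ℕ → ℕ → Prop) → Prop, StepFor C S q z →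
        ({r ∈ D | q r}).ncard ≤ 2 ^ n := by
      intro z hz q hq
      have hinj : Set.InjOn (restrictRel ((S.erase z : Finset ℕ) : Set ℕ)) {r ∈ D | q r} := by
        intro r hr r' hr' he
        refine eq_of_step hz hq (hD r hr.1) (hD r' hr'.1) hr.2 hr'.2 ?_
        intro a ha b hb haz hbz
        have := congrFun (congrFun he a) b
        simpa [restrictRel, ha, hb, haz, hbz] using this
      rw [← Set.InjOn.ncard_image hinj]
      refine ih (S.erase z) (by rw [Finset.card_erase_of_mem hz]; omega) _ ?_
      rintro _ ⟨r, hr, rfl⟩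
      obtain ⟨⟨s1, i1, t1, c1⟩, hT⟩ := hD r hr.1
      have hsub : ∀ w, w ∈ ((S.erase z : Finset ℕ) : Set ℕ) → w ∈ S := by
        intro w hw; simp at hw; exact hw.1
      refine ⟨⟨fun a b h => ⟨h.1, h.2.1⟩, fun a ha h => i1 a (hsub a ha) h.2.2, ?_, ?_⟩, ?_⟩
      · intro a ha b hb c hc hab hbc
        exact ⟨ha, hc, t1 a (hsub a ha) b (hsub b hb) c (hsub c hc) hab.2.2 hbc.2.2⟩
      · intro a ha b hb hab
        exact (c1 a (hsub a ha) b (hsub b hb) hab).imp (fun h => ⟨ha, hb, h⟩) (fun h => ⟨hb, ha, h⟩)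
      · intro a ha b hb c hc hab hbc
        exact hC _ r a b c ha hb hc (hT a (hsub a ha) b (hsub b hb) c (hsub c hc) hab hbc)
    have hun : D = {r ∈ D | p r} ∪ {r ∈ D | ¬ p r} := by
      ext r; simp only [Set.mem_union, Set.mem_ofPred_eq]; tauto
    rw [hun, pow_succ]
    have := Set.ncard_union_le {r ∈ D | p r} {r ∈ D | ¬ p r}
    have := piece x hx p h1
    have := piece y hy (fun r => ¬ p r) h2
    omega

def TT (j : ℕ) (r : ℕ → ℕ → Prop) (x y z : ℕ) : Prop :=
  if j = 1 then ¬ (r x y ∧ r x z) else if j = 3 then ¬ (r y x ∧ r z x)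
  else ¬ (r y x ∧ r x z) ∧ ¬ (r z x ∧ r x y)

def CC (i j : ℕ) (r : ℕ → ℕ → Prop) (a b c : ℕ) : Prop :=
  if i = 1 then TT j r a b c else if i = 2 then TT j r b a c else TT j r c a b

lemma CC_restrict (i j : ℕ) (A : Set ℕ) (r : ℕ → ℕ → Prop) (a b c : ℕ) (ha : a ∈ A) (hb : b ∈ A)
    (hc : c ∈ A) (h : CC i j r a b c) : CC i j (restrictRel A r) a b c := by
  simpa [CC, TT, restrictRel, ha, hb, hc] using h

lemma TT_symm {j r x y z} (h : TT j r x y z) : TT j r x z y := by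
  unfold TT at *
  split_ifs at * <;> tauto

lemma TT_of_pos {X : Set ℕ} {r : ℕ → ℕ → Prop} (hr : IsLinearOrderOn X r) {j a b c x y z : ℕ}
    (hj : j = 1 ∨ j = 2 ∨ j = 3)
    (hx : x ∈ X) (hy : y ∈ X) (hz : z ∈ X) (hyz : y ≠ z)
    (hs : ∀ w, (w = a ∨ w = b ∨ w = c) ↔ (w = x ∨ w = y ∨ w = z))
    (h : posInTriple r a b c x ≠ j) : TT j r x y z := by
  obtain ⟨s1, i1, t1, c1⟩ := hr
  have asy : ∀ u v, r u v → ¬ r v u := fun u v h1 h2 =>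
    i1 u (s1 _ _ h1).1 (t1 u (s1 _ _ h1).1 v (s1 _ _ h1).2 u (s1 _ _ h1).1 h1 h2)
  have hxx := i1 x hx
  unfold posInTriple at h
  simp only [hs] at h
  have mid : ∀ u v, (∀ w, (w = x ∨ w = y ∨ w = z) ↔ (w = x ∨ w = u ∨ w = v)) →
      r u x → r x v → 1 + Set.ncard {w : ℕ | (w = x ∨ w = y ∨ w = z) ∧ r w x} = 2 := by
    intro u v huv h1 h2
    have : {w : ℕ | (w = x ∨ w = y ∨ w = z) ∧ r w x} = {u} := by
      ext w
      simp only [huv, Set.mem_ofPred_eq, Set.mem_singleton_iff]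
      constructor
      · rintro ⟨rfl | rfl | rfl, h⟩
        · exact absurd h hxx
        · rfl
        · exact absurd h2 (asy _ _ h)
      · rintro rfl; exact ⟨by simp, h1⟩
    rw [this, Set.ncard_singleton]
  rcases hj with rfl | rfl | rfl
  · simp only [TT, if_true]
    rintro ⟨h1, h2⟩
    apply h
    have : {w : ℕ | (w = x ∨ w = y ∨ w = z) ∧ r w x} = ∅ := by
      ext w
      simp only [Set.mem_ofPred_eq, Set.mem_empty_iff_false, iff_false]
      rintro ⟨rfl | rfl | rfl, h5⟩
      · exact hxx h5
      · exact asy _ _ h5 h1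
      · exact asy _ _ h5 h2
    rw [this, Set.ncard_empty]
  · simp only [TT]
    norm_num
    refine ⟨fun h1 h2 => h (mid y z (fun w => Iff.rfl) h1 h2),
      fun h1 h2 => h (mid z y (fun w => by tauto) h1 h2)⟩
  · simp only [TT]
    norm_num
    intro h1 h2
    apply h
    have : {w : ℕ | (w = x ∨ w = y ∨ w = z) ∧ r w x} = {y, z} := by
      ext w
      simp only [Set.mem_ofPred_eq, Set.mem_insert_iff, Set.mem_singleton_iff]
      constructor
      · rintro ⟨rfl | rfl | rfl, h⟩
        · exact absurd h hxx
        · simp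
        · simp
      · rintro (rfl | rfl)
        · exact ⟨by simp, h1⟩
        · exact ⟨by simp, h2⟩
    rw [this, Set.ncard_pair hyz]

/-- removing an extreme element -/
lemma step_ext (C : (ℕ → ℕ → Prop) → ℕ → ℕ → ℕ → Prop) (j : ℕ) (hj : j = 1 ∨ j = 2 ∨ j = 3)
    (S : Finset ℕ) (x : ℕ) (hx : x ∈ S)
    (hT : ∀ r, Good C S r → ∀ y ∈ S, ∀ z ∈ S, y ≠ x → z ≠ x → y ≠ z → TT j r x y z) :
    ∃ p, StepFor C S p x ∧ StepFor C S (fun r => ¬ p r) x := by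
  rcases hj with rfl | rfl | rfl
  · refine ⟨fun r => ∃ t ∈ S, t ≠ x ∧ r x t, ?_, ?_⟩
    · rintro r r' h h' ⟨t, ht, htx, hxt⟩ - ha y hy hyx hyr
      obtain ⟨s2, i2, t2, c2⟩ := h'.1
      obtain ⟨s1, i1, t1, c1⟩ := h.1
      by_contra hcon
      have h2 : r' x y := (c2 x hx y hy hyx.symm).resolve_right hcon
      have hyt : y ≠ t := by
        rintro rfl
        exact i1 x hx (t1 x hx y hy x hx hxt hyr)
      have h3 : r' y t := (ha y hy t ht hyx htx).1 (t1 y hy x hx t ht hyr hxt)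
      have h4 := t2 x hx y hy t ht h2 h3
      have := hT r' h' y hy t ht hyx htx hyt
      simp [TT] at this
      exact this h2 h4
    · intro r r' h h' hp hp' ha y hy hyx hyr
      obtain ⟨s2, i2, t2, c2⟩ := h'.1
      exact (c2 y hy x hx hyx).resolve_right fun h => hp' ⟨y, hy, hyx, h⟩
  · refine ⟨fun r => ∃ t ∈ S, t ≠ x ∧ r x t, ?_, ?_⟩
    · rintro r r' h h' ⟨t, ht, htx, hxt⟩ - ha y hy hyx hyr
      obtain ⟨s1, i1, t1, c1⟩ := h.1
      have hyt : y ≠ t := by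
        rintro rfl
        exact i1 x hx (t1 x hx y hy x hx hxt hyr)
      have := hT r h y hy t ht hyx htx hyt
      simp [TT] at this
      exact absurd hxt (this.1 hyr)
    · intro r r' h h' hp hp' ha y hy hyx hyr
      obtain ⟨s2, i2, t2, c2⟩ := h'.1
      exact (c2 y hy x hx hyx).resolve_right fun h => hp' ⟨y, hy, hyx, h⟩
  · refine ⟨fun r => ∃ t ∈ S, t ≠ x ∧ r t x, ?_, ?_⟩
    · rintro r r' h h' - ⟨t, ht, htx, hxt⟩ ha y hy hyx hyr
      obtain ⟨s2, i2, t2, c2⟩ := h'.1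
      obtain ⟨s1, i1, t1, c1⟩ := h.1
      by_cases hyt : y = t
      · rw [hyt]; exact hxt
      have := hT r h y hy t ht hyx htx hyt
      simp [TT] at this
      have h3 : r x t := (c1 x hx t ht htx.symm).resolve_right (this hyr)
      exact t2 y hy t ht x hx ((ha y hy t ht hyx htx).1 (t1 y hy x hx t ht hyr h3)) hxt
    · intro r r' h h' hp hp' ha y hy hyx hyr
      exact absurd ⟨y, hy, hyx, hyr⟩ hp

/-- the middle conditions -/
lemma step_mid (C : (ℕ → ℕ → Prop) → ℕ → ℕ → ℕ → Prop) (j : ℕ) (hj : j = 1 ∨ j = 2 ∨ j = 3)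
    (S : Finset ℕ) (l u : ℕ) (hl : l ∈ S) (hu : u ∈ S)
    (htriv : l = u → ∀ y ∈ S, y = l)
    (hT : ∀ r, Good C S r → ∀ y ∈ S, y ≠ l → y ≠ u → TT j r y l u) :
    ∃ x ∈ S, ∃ y ∈ S, ∃ p, StepFor C S p x ∧ StepFor C S (fun r => ¬ p r) y := by
  rcases hj with rfl | rfl | rfl
  · refine ⟨l, hl, u, hu, fun r => r l u, ?_, ?_⟩
    · intro r r' h h' hp hp' ha y hy hyx hyr
      exfalso
      obtain ⟨s1, i1, t1, c1⟩ := h.1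
      by_cases hyu : y = u
      · subst hyu; exact i1 l hl (t1 l hl y hy l hl hp hyr)
      have := hT r h y hy hyx hyu
      simp [TT] at this
      exact this hyr (t1 y hy l hl u hu hyr hp)
    · intro r r' h h' hp hp' ha y hy hyx hyr
      exfalso
      obtain ⟨s1, i1, t1, c1⟩ := h.1
      by_cases hyu : y = l
      · subst hyu; exact hp hyr
      have := hT r h y hy hyu hyx
      simp [TT] at this
      have hlu : l ≠ u := by
        rintro rfl
        exact this hyr hyr
      have h2 : r u l := (c1 l hl u hu hlu).resolve_left hp
      exact this (t1 y hy u hu l hl hyr h2) hyr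
  · refine ⟨u, hu, u, hu, fun r => r l u, ?_, ?_⟩
    · intro r r' h h' hp hp' ha y hy hyx hyr
      obtain ⟨s1, i1, t1, c1⟩ := h.1
      obtain ⟨s2, i2, t2, c2⟩ := h'.1
      by_cases hyl : y = l
      · subst hyl; exact hp'
      have k := hT r h y hy hyl hyx
      have k' := hT r' h' y hy hyl hyx
      simp [TT] at k k'
      have hlu : l ≠ u := by
        rintro rfl
        exact i1 _ hl hp
      have e := ha y hy l hl hyx hlu
      have h1 : r y l := (c1 y hy l hl hyl).resolve_right fun h => k.1 h hyr
      exact (c2 y hy u hu hyx).resolve_right fun h => k'.2 h (e.1 h1)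
    · intro r r' h h' hp hp' ha y hy hyx hyr
      obtain ⟨s1, i1, t1, c1⟩ := h.1
      obtain ⟨s2, i2, t2, c2⟩ := h'.1
      by_cases hyl : y = l
      · subst hyl; exact absurd hyr hp
      have k := hT r h y hy hyl hyx
      have k' := hT r' h' y hy hyl hyx
      simp [TT] at k k'
      have h1 : r y l := (c1 y hy l hl hyl).resolve_right fun h => k.1 h hyr
      by_cases hlu : l = u
      · exact absurd (htriv hlu y hy) hyl
      have e := ha y hy l hl hyx hlu
      exact (c2 y hy u hu hyx).resolve_right fun h => k'.2 h (e.1 h1)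
  · refine ⟨u, hu, l, hl, fun r => r l u, ?_, ?_⟩
    · intro r r' h h' hp hp' ha y hy hyx hyr
      obtain ⟨s2, i2, t2, c2⟩ := h'.1
      by_cases hyl : y = l
      · subst hyl; exact hp'
      have k' := hT r' h' y hy hyl hyx
      simp [TT] at k'
      by_contra hcon
      have h3 : r' u y := (c2 u hu y hy (Ne.symm hyx)).resolve_right hcon
      exact k' (t2 l hl u hu y hy hp' h3) h3
    · intro r r' h h' hp hp' ha y hy hyx hyr
      obtain ⟨s2, i2, t2, c2⟩ := h'.1
      by_cases hlu : l = u
      · subst hlu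
        have k' := hT r' h' y hy hyx hyx
        simp [TT] at k'
        exact (c2 y hy l hl hyx).resolve_right k'
      have h2 : r' u l := (c2 l hl u hu hlu).resolve_left hp'
      by_cases hyu : y = u
      · subst hyu; exact h2
      have k' := hT r' h' y hy hyx hyu
      simp [TT] at k'
      by_contra hcon
      have h3 : r' l y := (c2 l hl y hy (Ne.symm hyx)).resolve_right hcon
      exact k' h3 (t2 u hu l hl y hy h2 h3)

lemma CC_step (i j : ℕ) (hi : i = 1 ∨ i = 2 ∨ i = 3) (hj : j = 1 ∨ j = 2 ∨ j = 3)
    (S : Finset ℕ) (hS : S.Nonempty) : ∃ x ∈ S, ∃ y ∈ S, ∃ p,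
      StepFor (CC i j) S p x ∧ StepFor (CC i j) S (fun r => ¬ p r) y := by
  have hl := S.min'_mem hS
  have hu := S.max'_mem hS
  have hlm : ∀ y ∈ S, y ≠ S.min' hS → S.min' hS < y := fun y hy h =>
    lt_of_le_of_ne (S.min'_le y hy) (Ne.symm h)
  have hum : ∀ y ∈ S, y ≠ S.max' hS → y < S.max' hS := fun y hy h =>
    lt_of_le_of_ne (S.le_max' y hy) h
  rcases hi with rfl | rfl | rfl
  · obtain ⟨p, h⟩ := step_ext (CC 1 j) j hj S _ hl (by
      intro r hr y hy z hz hyx hzx hyz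
      rcases lt_or_gt_of_ne hyz with h | h
      · simpa [CC] using hr.2 _ hl y hy z hz (hlm y hy hyx) h
      · exact TT_symm (by simpa [CC] using hr.2 _ hl z hz y hy (hlm z hz hzx) h))
    exact ⟨_, hl, _, hl, p, h⟩
  · exact step_mid (CC 2 j) j hj S _ _ hl hu (by
      intro h y hy
      by_contra hne
      have := hlm y hy hne
      have := S.le_max' y hy
      omega) (by
      intro r hr y hy h1 h2
      simpa [CC] using hr.2 _ hl y hy _ hu (hlm y hy h1) (hum y hy h2))
  · obtain ⟨p, h⟩ := step_ext (CC 3 j) j hj S _ hu (by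
      intro r hr y hy z hz hyx hzx hyz
      rcases lt_or_gt_of_ne hyz with h | h
      · simpa [CC] using hr.2 y hy z hz _ hu h (hum z hz hzx)
      · exact TT_symm (by simpa [CC] using hr.2 z hz y hy _ hu h (hum y hy hyx)))
    exact ⟨_, hu, _, hu, p, h⟩


/-- If every triple `a < b < c` of `{1,…,m}` satisfies the same never condition `iNj`
in the domain `D` on `{1,…,m}`, then `D` has at most `2^(m-1)` orders. -/
theorem single_never_condition_card_bound (m : ℕ) (hm : 1 ≤ m)
    (i j : ℕ) (hi : i ∈ ({1, 2, 3} : Set ℕ)) (hj : j ∈ ({1, 2, 3} : Set ℕ))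
    (D : Set (ℕ → ℕ → Prop)) (hD : IsDomainOn (Set.Icc 1 m) D)
    (h : ∀ a ∈ Set.Icc 1 m, ∀ b ∈ Set.Icc 1 m, ∀ c ∈ Set.Icc 1 m,
      a < b → b < c → NeverCondition D a b c i j) :
    D.ncard ≤ 2 ^ (m - 1) := by
  have hi' : i = 1 ∨ i = 2 ∨ i = 3 := by simpa using hi
  have hj' : j = 1 ∨ j = 2 ∨ j = 3 := by simpa using hj
  refine main_bound (CC i j) (CC_restrict i j) (CC_step i j hi' hj') (m - 1) (Finset.Icc 1 m)
    (by simp; omega) D ?_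
  intro r hr
  have hlin := hD r hr
  refine ⟨by simpa using hlin, ?_⟩
  intro a ha b hb c hc hab hbc
  have ha' : a ∈ Set.Icc 1 m := by simpa using ha
  have hb' : b ∈ Set.Icc 1 m := by simpa using hb
  have hc' : c ∈ Set.Icc 1 m := by simpa using hc
  have hn := h a ha' b hb' c hc' hab hbc r hr
  rcases hi' with rfl | rfl | rfl
  · simp only [CC, if_true]
    exact TT_of_pos hlin hj' ha' hb' hc' (by omega) (fun w => Iff.rfl) hn
  · simp only [CC]
    norm_num
    exact TT_of_pos hlin hj' hb' ha' hc' (by omega) (fun w => by tauto) hn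
  · simp only [CC]
    norm_num
    exact TT_of_pos hlin hj' hc' ha' hb' (by omega) (fun w => by tauto) hn
end

section
/- For every n ≥ 5, no Condorcet domain on an n-element set is (4,9)-abundant: every Condorcet domain D on an n-element set X (n ≥ 5) has a 4-element subset A ⊆ X such that the restriction of D to A contains at most 8 distinct linear orders. -/
/-- Never-rules compatible with the order `abc`; `p = (a<b)`, `q = (a<c)`, `s = (b<c)`. -/
def okRule (t : Fin 6) (p q s : Bool) : Bool :=
  !(p && !q && s) && !(!p && q && !s) &&
  match t with
  | 0 => !(!p && !q && s) && !(p && q && !s)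
  | 1 => !(!p && !q && s) && !(!p && !q && !s)
  | 2 => !(!p && !q && s) && !(!p && q && s)
  | 3 => !(p && !q && !s) && !(p && q && !s)
  | 4 => !(p && !q && !s) && !(!p && !q && !s)
  | 5 => !(p && !q && !s) && !(!p && q && s)

abbrev B6 := Bool × Bool × Bool × Bool × Bool × Bool

def bools : List Bool := [true, false]

def allB6 : List B6 :=
  bools.flatMap fun a => bools.flatMap fun b => bools.flatMap fun c =>
  bools.flatMap fun d => bools.flatMap fun e => bools.map fun f => (a, b, c, d, e, f)

/-- Components: ab, ac, ad, bc, bd, cd. -/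
def okQuad (t1 t2 t3 t4 : Fin 6) (v : B6) : Bool :=
  okRule t1 v.1 v.2.1 v.2.2.2.1 && okRule t2 v.1 v.2.2.1 v.2.2.2.2.1 &&
  okRule t3 v.2.1 v.2.2.1 v.2.2.2.2.2 && okRule t4 v.2.2.2.1 v.2.2.2.2.1 v.2.2.2.2.2

def goodQ (t1 t2 t3 t4 : Fin 6) : Bool :=
  Nat.ble 9 (allB6.filter (okQuad t1 t2 t3 t4)).length

def fin6 : List (Fin 6) := [0, 1, 2, 3, 4, 5]

def goodList : List (Fin 6 × Fin 6 × Fin 6 × Fin 6) :=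
  [(1, 1, 2, 2), (1, 1, 4, 4), (1, 4, 1, 4), (2, 2, 3, 3), (3, 3, 2, 2), (3, 3, 4, 4), (3, 4, 4, 1), (4, 1, 1, 2), (4, 3, 2, 1)]

theorem good_check : (fin6.all fun a => fin6.all fun b => fin6.all fun c => fin6.all fun d =>
    !(goodQ a b c d) || goodList.contains (a, b, c, d)) = true := by decide +kernel

theorem mem_fin6 (a : Fin 6) : a ∈ fin6 := by revert a; decide

theorem good_mem {a b c d : Fin 6} (h : goodQ a b c d = true) : (a, b, c, d) ∈ goodList := by
  have h0 := good_check
  simp only [List.all_eq_true] at h0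
  have h1 := h0 a (mem_fin6 a) b (mem_fin6 b) c (mem_fin6 c) d (mem_fin6 d)
  rw [h] at h1
  simpa using h1

theorem final_check : (goodList.all fun q1 => goodList.all fun q2 =>
    !(decide (q1.1 = q2.1)) || goodList.all fun q3 =>
    !(decide (q1.2.1 = q3.1) && decide (q2.2.1 = q3.2.1)) || goodList.all fun q4 =>
    !(decide (q1.2.2.1 = q4.1) && decide (q2.2.2.1 = q4.2.1) && decide (q3.2.2.1 = q4.2.2.1)) ||
    goodList.all fun q5 =>
    !(decide (q1.2.2.2 = q5.1) && decide (q2.2.2.2 = q5.2.1) && decide (q3.2.2.2 = q5.2.2.1)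
      && decide (q4.2.2.2 = q5.2.2.2))) = true := by decide +kernel

/-- triples: 012 013 014 023 024 034 123 124 134 234 -/
theorem final_false (t012 t013 t014 t023 t024 t034 t123 t124 t134 t234 : Fin 6)
    (h1 : goodQ t012 t013 t023 t123 = true) (h2 : goodQ t012 t014 t024 t124 = true)
    (h3 : goodQ t013 t014 t034 t134 = true) (h4 : goodQ t023 t024 t034 t234 = true)
    (h5 : goodQ t123 t124 t134 t234 = true) : False := by
  have h0 := final_check
  simp only [List.all_eq_true, Bool.or_eq_true] at h0
  have e1 := (h0 _ (good_mem h1) _ (good_mem h2)).resolve_left (by simp)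
  have e2 := (e1 _ (good_mem h3)).resolve_left (by simp)
  have e3 := (e2 _ (good_mem h4)).resolve_left (by simp)
  have e4 := e3 _ (good_mem h5)
  simp at e4

theorem mem_allB6 (v : B6) : v ∈ allB6 := by
  obtain ⟨a, b, c, d, e, f⟩ := v
  have h : ∀ x : Bool, x ∈ bools := by decide
  simp [allB6, h]

theorem lin_asymm {α : Type*} {X : Set α} {r : α → α → Prop} (hr : IsLinearOrderOn X r)
    {a b : α} (h : r a b) : ¬ r b a := fun h' => by
  obtain ⟨ha, hb⟩ := hr.1 a b h
  exact hr.2.1 a ha (hr.2.2.1 a ha b hb a ha h h')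

theorem lin_not {α : Type*} {X : Set α} {r : α → α → Prop} (hr : IsLinearOrderOn X r)
    {a b : α} (ha : a ∈ X) (hb : b ∈ X) (hab : a ≠ b) : r b a ↔ ¬ r a b :=
  ⟨fun h => lin_asymm hr h, fun h => (hr.2.2.2 a ha b hb hab).resolve_left h⟩

theorem majCount_three_s16 {α : Type*} (r1 r2 r3 : α → α → Prop) (a b : α)
    [Decidable (r1 a b)] [Decidable (r2 a b)] [Decidable (r3 a b)] :
    majCount [r1, r2, r3] a b =
      (if r1 a b then 1 else 0) + (if r2 a b then 1 else 0) + (if r3 a b then 1 else 0) := by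
  classical
  unfold majCount
  rw [Nat.card_eq_fintype_card, Fintype.card_subtype, Finset.card_filter]
  change ∑ i : Fin 3, _ = _
  rw [Fin.sum_univ_three]
  simp only [List.get]
  congr

theorem no_cycle_s16 {α : Type*} {X : Set α} {D : Set (α → α → Prop)} (hD : IsCondorcetDomain X D)
    {a b c : α} (ha : a ∈ X) (hb : b ∈ X) (hc : c ∈ X)
    {r1 r2 r3 : α → α → Prop} (h1 : r1 ∈ D) (h2 : r2 ∈ D) (h3 : r3 ∈ D)
    (h1a : r1 a b) (h1b : r1 b c) (h2a : r2 b c) (h2b : r2 c a) (h3a : r3 c a) (h3b : r3 a b) :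
    False := by
  classical
  have h := hD.2 [r1, r2, r3] (by simp [h1, h2, h3]) (by simp; decide) a ha b hb c hc
  have n2 := lin_asymm (hD.1 r2 h2) h2b
  have n3 := lin_asymm (hD.1 r3 h3) h3a
  simp only [MajPrefers, majCount_three_s16, h1a, h1b, h2a, h3b, n2, n3, if_true, if_false,
    List.length_cons, List.length_nil] at h
  have := h (by split_ifs <;> omega) (by split_ifs <;> omega)
  split_ifs at this <;> omega

open Classical in
theorem triple_rule {α : Type*} {X : Set α} {D : Set (α → α → Prop)} (hD : IsCondorcetDomain X D)
    {a b c : α} {r0 : α → α → Prop} (h0 : r0 ∈ D) (hab : r0 a b) (hbc : r0 b c) :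
    ∃ t : Fin 6, ∀ r ∈ D, okRule t (decide (r a b)) (decide (r a c)) (decide (r b c)) = true := by
  have L0 := hD.1 r0 h0
  obtain ⟨ha, hb⟩ := L0.1 _ _ hab
  obtain ⟨-, hc⟩ := L0.1 _ _ hbc
  have hac := L0.2.2.1 a ha b hb c hc hab hbc
  have nab : a ≠ b := fun h => L0.2.1 b hb (by rwa [h] at hab)
  have nbc : b ≠ c := fun h => L0.2.1 c hc (by rwa [h] at hbc)
  have nac : a ≠ c := fun h => L0.2.1 c hc (by rwa [h] at hac)
  have key : ∀ r ∈ D, (r b a ↔ ¬ r a b) ∧ (r c a ↔ ¬ r a c) ∧ (r c b ↔ ¬ r b c) ∧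
      ¬ (r a b ∧ r b c ∧ ¬ r a c) ∧ ¬ (¬ r a b ∧ ¬ r b c ∧ r a c) := by
    intro r hr
    have L := hD.1 r hr
    have e1 := lin_not L ha hb nab
    have e2 := lin_not L ha hc nac
    have e3 := lin_not L hb hc nbc
    refine ⟨e1, e2, e3, fun h => h.2.2 (L.2.2.1 a ha b hb c hc h.1 h.2.1), fun h => ?_⟩
    exact e2.1 (L.2.2.1 c hc b hb a ha (e3.2 h.2.1) (e1.2 h.1)) h.2.2
  have c1 : (∀ r ∈ D, ¬ (¬ r a b ∧ ¬ r a c ∧ r b c)) ∨ (∀ r ∈ D, ¬ (r a b ∧ ¬ r a c ∧ ¬ r b c)) := by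
    by_contra! hcon
    obtain ⟨⟨r2, m2, p2, q2, s2⟩, ⟨r3, m3, p3, q3, s3⟩⟩ := hcon
    have k2 := key r2 m2
    have k3 := key r3 m3
    exact no_cycle_s16 hD ha hb hc h0 m2 m3 hab hbc s2 (k2.2.1.2 q2) (k3.2.1.2 q3) p3
  have c2 : (∀ r ∈ D, ¬ (r a b ∧ r a c ∧ ¬ r b c)) ∨ (∀ r ∈ D, ¬ (¬ r a b ∧ ¬ r a c ∧ ¬ r b c)) ∨
      (∀ r ∈ D, ¬ (¬ r a b ∧ r a c ∧ r b c)) := by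
    by_contra! hcon
    obtain ⟨⟨r1, m1, p1, q1, s1⟩, ⟨r2, m2, p2, q2, s2⟩, ⟨r3, m3, p3, q3, s3⟩⟩ := hcon
    have k1 := key r1 m1
    have k2 := key r2 m2
    have k3 := key r3 m3
    exact no_cycle_s16 hD ha hc hb m1 m2 m3 q1 (k1.2.2.1.2 s1) (k2.2.2.1.2 s2) (k2.1.2 p2)
      (k3.1.2 p3) q3
  rcases c1 with c1 | c1 <;> rcases c2 with c2 | c2 | c2
  · refine ⟨0, fun r hr => ?_⟩
    have k := (key r hr).2.2.2; have u := c1 r hr; have w := c2 r hr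
    clear key c1 c2 hD L0 h0 hab hbc hac nab nbc nac ha hb hc hr
    by_cases p : r a b <;> by_cases q : r a c <;> by_cases s : r b c <;> simp_all [okRule]
  · refine ⟨1, fun r hr => ?_⟩
    have k := (key r hr).2.2.2; have u := c1 r hr; have w := c2 r hr
    clear key c1 c2 hD L0 h0 hab hbc hac nab nbc nac ha hb hc hr
    by_cases p : r a b <;> by_cases q : r a c <;> by_cases s : r b c <;> simp_all [okRule]
  · refine ⟨2, fun r hr => ?_⟩
    have k := (key r hr).2.2.2; have u := c1 r hr; have w := c2 r hr
    clear key c1 c2 hD L0 h0 hab hbc hac nab nbc nac ha hb hc hr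
    by_cases p : r a b <;> by_cases q : r a c <;> by_cases s : r b c <;> simp_all [okRule]
  · refine ⟨3, fun r hr => ?_⟩
    have k := (key r hr).2.2.2; have u := c1 r hr; have w := c2 r hr
    clear key c1 c2 hD L0 h0 hab hbc hac nab nbc nac ha hb hc hr
    by_cases p : r a b <;> by_cases q : r a c <;> by_cases s : r b c <;> simp_all [okRule]
  · refine ⟨4, fun r hr => ?_⟩
    have k := (key r hr).2.2.2; have u := c1 r hr; have w := c2 r hr
    clear key c1 c2 hD L0 h0 hab hbc hac nab nbc nac ha hb hc hr
    by_cases p : r a b <;> by_cases q : r a c <;> by_cases s : r b c <;> simp_all [okRule]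
  · refine ⟨5, fun r hr => ?_⟩
    have k := (key r hr).2.2.2; have u := c1 r hr; have w := c2 r hr
    clear key c1 c2 hD L0 h0 hab hbc hac nab nbc nac ha hb hc hr
    by_cases p : r a b <;> by_cases q : r a c <;> by_cases s : r b c <;> simp_all [okRule]

open Classical in
theorem quad_good {α : Type*} {X : Set α} {D : Set (α → α → Prop)} (hD : IsDomainOn X D)
    {a b c d : α} {r0 : α → α → Prop} (h0 : r0 ∈ D) (hab : r0 a b) (hbc : r0 b c) (hcd : r0 c d)
    (hno : ∀ A : Set α, A ⊆ X → A.ncard = 4 → 8 < (restrictDom A D).ncard)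
    {t1 t2 t3 t4 : Fin 6}
    (h1 : ∀ r ∈ D, okRule t1 (decide (r a b)) (decide (r a c)) (decide (r b c)) = true)
    (h2 : ∀ r ∈ D, okRule t2 (decide (r a b)) (decide (r a d)) (decide (r b d)) = true)
    (h3 : ∀ r ∈ D, okRule t3 (decide (r a c)) (decide (r a d)) (decide (r c d)) = true)
    (h4 : ∀ r ∈ D, okRule t4 (decide (r b c)) (decide (r b d)) (decide (r c d)) = true) :
    goodQ t1 t2 t3 t4 = true := by
  have L0 := hD r0 h0
  obtain ⟨ha, hb⟩ := L0.1 _ _ hab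
  obtain ⟨hc, hd⟩ := L0.1 _ _ hcd
  have hac := L0.2.2.1 a ha b hb c hc hab hbc
  have hbd := L0.2.2.1 b hb c hc d hd hbc hcd
  have had := L0.2.2.1 a ha b hb d hd hab hbd
  have ne : ∀ {x y : α}, r0 x y → x ≠ y := fun {x y} h e => by
    subst e
    exact L0.2.1 x (L0.1 _ _ h).1 h
  have hA : ({a, b, c, d} : Set α).ncard = 4 := by
    have : ({a, b, c, d} : Set α) = (({a, b, c, d} : Finset α) : Set α) := by simp
    rw [this, Set.ncard_coe_finset]
    simp [ne hab, ne hac, ne had, ne hbc, ne hbd, ne hcd]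
  have hsub : ({a, b, c, d} : Set α) ⊆ X := by
    rintro x (rfl | rfl | rfl | rfl) <;> assumption
  have hlt := hno _ hsub hA
  set L := allB6.filter (okQuad t1 t2 t3 t4) with hL
  have hle : (restrictDom {a, b, c, d} D).ncard ≤ (L.toFinset : Set B6).ncard := by
    refine Set.ncard_le_ncard_of_injOn
      (fun s => (decide (s a b), decide (s a c), decide (s a d), decide (s b c),
        decide (s b d), decide (s c d))) ?_ ?_ (Finset.finite_toSet _)
    · rintro _ ⟨r, hr, rfl⟩
      have := h1 r hr
      have := h2 r hr
      have := h3 r hr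
      have := h4 r hr
      simp [hL, mem_allB6, okQuad, restrictRel, *]
    · rintro _ ⟨r, hr, rfl⟩ _ ⟨r', hr', rfl⟩ h
      have Lr := hD r hr
      have Lr' := hD r' hr'
      simp only [restrictRel, Prod.mk.injEq, decide_eq_decide, Set.mem_insert_iff,
        Set.mem_singleton_iff, true_or, or_true, true_and] at h
      obtain ⟨e1, e2, e3, e4, e5, e6⟩ := h
      have irr : ∀ x ∈ X, (r x x ↔ r' x x) := fun x hx =>
        iff_of_false (Lr.2.1 x hx) (Lr'.2.1 x hx)
      have sw : ∀ {x y : α}, r0 x y → (r x y ↔ r' x y) → (r y x ↔ r' y x) := fun {x y} h e => by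
        obtain ⟨hx, hy⟩ := L0.1 _ _ h
        rw [lin_not Lr hx hy (ne h), lin_not Lr' hx hy (ne h), e]
      funext x y
      simp only [restrictRel, eq_iff_iff]
      refine and_congr_right fun hx => and_congr_right fun hy => ?_
      rcases hx with rfl | rfl | rfl | rfl <;> rcases hy with rfl | rfl | rfl | rfl <;>
        first
        | assumption
        | (apply irr; assumption)
        | (apply sw <;> assumption)
  rw [Set.ncard_coe_finset] at hle
  have := List.toFinset_card_le L
  have h9 : 9 ≤ L.length := by omega
  exact Nat.ble_eq_true_of_le h9

theorem exists_chain {α : Type*} (X : Set α) (hX : X.Finite) (hXcard : 5 ≤ X.ncard)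
    (r : α → α → Prop) (hr : IsLinearOrderOn X r) :
    ∃ x0 x1 x2 x3 x4 : α, r x0 x1 ∧ r x1 x2 ∧ r x2 x3 ∧ r x3 x4 := by
  classical
  have : Fintype X := hX.fintype
  let r' : X → X → Prop := fun a b => r a b
  have i1 : IsStrictTotalOrder X r' :=
    { trichotomous := fun a b h1 h2 => by
        by_contra h
        rcases hr.2.2.2 a a.2 b b.2 (fun e => h (Subtype.ext e)) with h' | h'
        · exact h1 h'
        · exact h2 h'
      irrefl := fun a => hr.2.1 a a.2
      trans := fun a b c => hr.2.2.1 a a.2 b b.2 c c.2 }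
  letI : LinearOrder X := linearOrderOfSTO r'
  have hc : (Finset.univ : Finset X).card = X.ncard := by
    rw [Finset.card_univ, ← Nat.card_eq_fintype_card, Nat.card_coe_set_eq]
  let f := (Finset.univ : Finset X).orderEmbOfFin hc
  have hf : ∀ i j : Fin X.ncard, i < j → r (f i) (f j) := fun i j h => f.strictMono h
  refine ⟨f ⟨0, by omega⟩, f ⟨1, by omega⟩, f ⟨2, by omega⟩, f ⟨3, by omega⟩, f ⟨4, by omega⟩,
    hf _ _ ?_, hf _ _ ?_, hf _ _ ?_, hf _ _ ?_⟩ <;> simp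

/-- For `n ≥ 5`, no Condorcet domain on an `n`-element set is `(4,9)`-abundant:
it has a 4-element subset whose restriction contains at most 8 orders. -/
theorem no_four_nine_abundant {α : Type*} (X : Set α) (hX : X.Finite)
    (hXcard : 5 ≤ X.ncard) (D : Set (α → α → Prop)) (hD : IsCondorcetDomain X D) :
    ∃ A : Set α, A ⊆ X ∧ A.ncard = 4 ∧ (restrictDom A D).ncard ≤ 8 := by
  classical
  by_contra! hno
  have hne : D.Nonempty := by
    obtain ⟨A, hA, hA4⟩ := Set.exists_subset_card_eq (show 4 ≤ X.ncard by omega)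
    have := hno A hA hA4
    by_contra hemp
    rw [Set.not_nonempty_iff_eq_empty] at hemp
    simp [hemp, restrictDom] at this
  obtain ⟨r0, h0⟩ := hne
  have L0 := hD.1 r0 h0
  obtain ⟨x0, x1, x2, x3, x4, h01, h12, h23, h34⟩ := exists_chain X hX hXcard r0 L0
  have tr : ∀ {x y z : α}, r0 x y → r0 y z → r0 x z := fun {x y z} h h' =>
    L0.2.2.1 x (L0.1 _ _ h).1 y (L0.1 _ _ h).2 z (L0.1 _ _ h').2 h h'
  have h02 := tr h01 h12
  have h13 := tr h12 h23
  have h24 := tr h23 h34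
  have h03 := tr h02 h23
  have h14 := tr h13 h34
  obtain ⟨t012, k012⟩ := triple_rule hD h0 h01 h12
  obtain ⟨t013, k013⟩ := triple_rule hD h0 h01 h13
  obtain ⟨t014, k014⟩ := triple_rule hD h0 h01 h14
  obtain ⟨t023, k023⟩ := triple_rule hD h0 h02 h23
  obtain ⟨t024, k024⟩ := triple_rule hD h0 h02 h24
  obtain ⟨t034, k034⟩ := triple_rule hD h0 h03 h34
  obtain ⟨t123, k123⟩ := triple_rule hD h0 h12 h23
  obtain ⟨t124, k124⟩ := triple_rule hD h0 h12 h24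
  obtain ⟨t134, k134⟩ := triple_rule hD h0 h13 h34
  obtain ⟨t234, k234⟩ := triple_rule hD h0 h23 h34
  exact final_false t012 t013 t014 t023 t024 t034 t123 t124 t134 t234
    (quad_good hD.1 h0 h01 h12 h23 hno k012 k013 k023 k123)
    (quad_good hD.1 h0 h01 h12 h24 hno k012 k014 k024 k124)
    (quad_good hD.1 h0 h01 h13 h34 hno k013 k014 k034 k134)
    (quad_good hD.1 h0 h02 h23 h34 hno k023 k024 k034 k234)
    (quad_good hD.1 h0 h12 h23 h34 hno k123 k124 k134 k234)
end
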